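/- arXiv:1508.04891 — 5 statements merged into one kernel-verified Lean document; each statement's English description precedes it below -/
import Mathlib

section
/- Let E be an infinite-dimensional reflexive real Banach space, T : E → E a non-zero compact linear operator, φ : E → ℝ a lower semicontinuous, convex and coercive functional, I ⊂ ℝ a compact interval with 0 ∈ I, and ψ : I → ℝ a lower semicontinuous convex function. Then for each r > φ(0), one has sup_{x∈X} inf_{λ∈I} (φ(T(x) − λx) + ψ(λ)) = r + ψ(0), where X = {x ∈ E : φ(T(x)) ≤ r}. -/
/-!
The bound `≤` is the choice `l = 0` in the infimum. For `≥`, let `z < r + ψ 0`. By Baire's theorem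
`φ` is continuous, so by the intermediate value theorem on a line some `x₀` has
`z - ψ 0 < φ (T x₀) < r`. Take an affine minorant of `φ`, with linear part `f`, that is still above
`z - ψ 0` at `T x₀`. As `T` is compact and `ker f` is infinite-dimensional, there are `y n ∈ ker f`
with `‖y n‖ → ∞` and `T (y n) → 0`; put `x n = x₀ + y n`. For large `n`,

* `φ (T (x n)) < r`, because `T (x n) → T x₀`;
* for `l` close to `0`, the minorant at `T (x n) - l • x n` differs little from its value at `T x₀`,
  although `l • x n` need not be small, because `f (x n) = f x₀`; and `ψ l` is not much below `ψ 0`;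
* for the remaining `l`, the vector `T (x n) - l • x n` has large norm, so coercivity of `φ` wins,
  `ψ` being bounded below.
-/

open Bornology Filter Set Topology

lemma not_finiteDimensional_ker {𝕜 E G : Type*} [Field 𝕜] [AddCommGroup E] [Module 𝕜 E]
    [AddCommGroup G] [Module 𝕜 G] [FiniteDimensional 𝕜 G] (hE : ¬ FiniteDimensional 𝕜 E)
    (f : E →ₗ[𝕜] G) : ¬ FiniteDimensional 𝕜 f.ker := fun _ ↦
  have : FiniteDimensional 𝕜 (E ⧸ f.ker) := Module.Finite.equiv f.quotKerEquivRange.symm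
  hE (Module.Finite.of_submodule_quotient f.ker)

section CompactOperator

variable {𝕜 E F : Type*} [NontriviallyNormedField 𝕜] [CompleteSpace 𝕜]
  [NormedAddCommGroup E] [NormedSpace 𝕜 E] [NormedAddCommGroup F] [NormedSpace 𝕜 F]

lemma exists_one_le_norm_norm_map_lt_of_isCompactOperator (hE : ¬ FiniteDimensional 𝕜 E)
    {T : E →ₗ[𝕜] F} (hT : IsCompactOperator T) {ε : ℝ} (hε : 0 < ε) :
    ∃ y, 1 ≤ ‖y‖ ∧ ‖T y‖ < ε := by
  obtain ⟨R, u, -, hu_le, hu_sep⟩ := exists_seq_norm_le_one_le_norm_sub hE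
  obtain ⟨K, hK, hTK⟩ := hT.image_closedBall_subset_compact R
  have hTu : ∀ n, T (u n) ∈ K := fun n ↦
    hTK (mem_image_of_mem T (mem_closedBall_zero_iff.2 (hu_le n)))
  obtain ⟨v, -, k, hk, hv⟩ := hK.tendsto_subseq hTu
  have hdiff : Tendsto (fun n ↦ T (u (k (n + 1))) - T (u (k n))) atTop (𝓝 0) := by
    simpa using (hv.comp (tendsto_add_atTop_nat 1)).sub hv
  obtain ⟨n, hn⟩ := (hdiff.norm.eventually_lt_const (by simpa using hε)).exists
  exact ⟨u (k (n + 1)) - u (k n), hu_sep (hk.injective.ne n.succ_ne_self), by simpa using hn⟩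

lemma exists_seq_tendsto_cobounded_map_tendsto_zero (hE : ¬ FiniteDimensional 𝕜 E)
    {T : E →ₗ[𝕜] F} (hT : IsCompactOperator T) :
    ∃ y : ℕ → E, Tendsto y atTop (cobounded E) ∧ Tendsto (fun n ↦ T (y n)) atTop (𝓝 0) := by
  choose c hc using fun n : ℕ ↦ NormedField.exists_lt_norm 𝕜 n
  have hc_pos : ∀ n, 0 < ‖c n‖ := fun n ↦ n.cast_nonneg.trans_lt (hc n)
  choose y hy hTy using fun n : ℕ ↦ exists_one_le_norm_norm_map_lt_of_isCompactOperator hE hT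
    (div_pos (Nat.one_div_pos_of_nat (n := n)) (hc_pos n))
  refine ⟨fun n ↦ c n • y n, tendsto_norm_atTop_iff_cobounded.1 ?_, ?_⟩
  · refine tendsto_atTop_mono (fun n ↦ ?_) tendsto_natCast_atTop_atTop
    rw [norm_smul]
    exact (hc n).le.trans (le_mul_of_one_le_right (norm_nonneg _) (hy n))
  · refine squeeze_zero_norm (fun n ↦ ?_) (tendsto_one_div_add_atTop_nhds_zero_nat (𝕜 := ℝ))
    rw [map_smul, norm_smul, mul_comm]
    exact ((lt_div_iff₀ (hc_pos n)).1 (hTy n)).le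

lemma exists_seq_mem_ker_tendsto_cobounded_map_tendsto_zero {G : Type*} [AddCommGroup G]
    [Module 𝕜 G] [FiniteDimensional 𝕜 G] (hE : ¬ FiniteDimensional 𝕜 E) {T : E →ₗ[𝕜] F}
    (hT : IsCompactOperator T) (f : E →ₗ[𝕜] G) :
    ∃ y : ℕ → E, (∀ n, y n ∈ f.ker) ∧ Tendsto y atTop (cobounded E) ∧
      Tendsto (fun n ↦ T (y n)) atTop (𝓝 0) := by
  obtain ⟨y, hy, hTy⟩ := exists_seq_tendsto_cobounded_map_tendsto_zero
    (not_finiteDimensional_ker hE f) (T := T.domRestrict f.ker) (hT.comp_clm f.ker.subtypeL)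
  exact ⟨fun n ↦ y n, fun n ↦ (y n).2,
    f.ker.subtypeₗᵢ.antilipschitz.tendsto_cobounded.comp hy, hTy⟩

end CompactOperator

lemma tendsto_sub_smul_cobounded {ι 𝕜 E : Type*} [NormedField 𝕜] [NormedAddCommGroup E]
    [NormedSpace 𝕜 E] {L : Filter ι} {u x : ι → E} (hu : L.IsBoundedUnder (· ≤ ·) (‖u ·‖))
    (hx : Tendsto x L (cobounded E)) {δ : ℝ} (hδ : 0 < δ) :
    Tendsto (fun q : ι × 𝕜 ↦ u q.1 - q.2 • x q.1) (L ×ˢ 𝓟 {l | δ ≤ ‖l‖}) (cobounded E) := by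
  obtain ⟨C, hC⟩ := hu
  have hbound : Tendsto (fun i ↦ δ * ‖x i‖ + -‖u i‖) L atTop :=
    tendsto_atTop_add_right_of_le' L (-C)
      ((tendsto_norm_atTop_iff_cobounded.2 hx).const_mul_atTop hδ)
      ((eventually_map.1 hC).mono fun _ ↦ neg_le_neg)
  refine tendsto_norm_atTop_iff_cobounded.1
    (tendsto_atTop_mono' _ ?_ (hbound.comp tendsto_fst))
  refine eventually_prod_principal_iff.2 (Eventually.of_forall fun i l hl ↦ ?_)
  calc δ * ‖x i‖ + -‖u i‖ ≤ ‖l • x i‖ - ‖u i‖ := by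
        rw [norm_smul, ← sub_eq_add_neg]
        gcongr
        exact hl
    _ ≤ ‖u i - l • x i‖ := by
        rw [norm_sub_rev]
        exact norm_sub_norm_le _ _

lemma continuous_of_convexOn_of_lowerSemicontinuous {E : Type*} [NormedAddCommGroup E]
    [NormedSpace ℝ E] [BaireSpace E] {φ : E → ℝ} (hconv : ConvexOn ℝ univ φ)
    (hlsc : LowerSemicontinuous φ) : Continuous φ := by
  have hclosed : ∀ n : ℕ, IsClosed {x | φ x ≤ n} := fun n ↦ hlsc.isClosed_preimage n
  have hunion : (⋃ n : ℕ, {x | φ x ≤ n}) = univ :=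
    eq_univ_of_forall fun x ↦ mem_iUnion.2 (exists_nat_ge (φ x))
  obtain ⟨n, x, hx⟩ := nonempty_interior_of_iUnion_of_closed hclosed hunion
  have hbdd : ∃ x₀ ∈ (univ : Set E), (𝓝 x₀).IsBoundedUnder (· ≤ ·) φ :=
    ⟨x, mem_univ x, n, eventually_map.2 (mem_interior_iff_mem_nhds.1 hx)⟩
  exact continuousOn_univ.1 (((hconv.continuousOn_tfae isOpen_univ univ_nonempty).out 3 1).1 hbdd)

section RealNormedSpace

variable {E : Type*} [NormedAddCommGroup E] [NormedSpace ℝ E] {φ : E → ℝ} {K : Set ℝ} {ψ : ℝ → ℝ}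

lemma exists_apply_smul_eq_of_coercive (hφ : Continuous φ)
    (hcoer : Tendsto φ (cobounded E) atTop) {v : E} (hv : v ≠ 0) {s : ℝ} (hs : φ 0 ≤ s) :
    ∃ t : ℝ, φ (t • v) = s := by
  have hline : Tendsto (fun t : ℝ ↦ t • v) atTop (cobounded E) := by
    simp_rw [← tendsto_norm_atTop_iff_cobounded, norm_smul]
    exact tendsto_norm_atTop_atTop.atTop_mul_const (norm_pos_iff.2 hv)
  obtain ⟨t, ht⟩ := ((hcoer.comp hline).eventually_ge_atTop s).exists
  exact mem_range_of_exists_le_of_exists_ge (f := fun t : ℝ ↦ φ (t • v)) (by fun_prop)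
    ⟨0, by simpa using hs⟩ ⟨t, ht⟩

/-- The bound is uniform in `x`, which may be unbounded: only its component `f x` matters. -/
lemma exists_dual_eventually_forall_lt_sub_smul_add (hφlsc : LowerSemicontinuous φ)
    (hφconv : ConvexOn ℝ univ φ) (hψ : LowerSemicontinuousWithinAt ψ K 0) {p : E} {z : ℝ}
    (hz : z < φ p + ψ 0) :
    ∃ f : E →L[ℝ] ℝ, ∀ s, ∀ᶠ q in 𝓝 p ×ˢ 𝓝[K] (0 : ℝ), ∀ x ∈ f ⁻¹' {s},
      z < φ (q.1 - q.2 • x) + ψ q.2 := by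
  obtain ⟨w, hzw, hwφ⟩ := exists_between (sub_lt_iff_lt_add.2 hz)
  obtain ⟨f, c, hfc, hfp⟩ := hφconv.exists_affine_le_of_lt (𝕜 := ℝ) (mem_univ p) hwφ isClosed_univ
    (lowerSemicontinuousOn_univ_iff.2 hφlsc)
  have hminorant : ∀ x, f x + c ≤ φ x := fun x ↦ by simpa using hfc ⟨x, mem_univ x⟩
  have hvalue : f p + c = w := by simpa using hfp
  refine ⟨f, fun s ↦ ?_⟩
  obtain ⟨m, hzm, hmψ⟩ := exists_between (sub_lt_comm.1 hzw)
  have haffine : Tendsto (fun q : E × ℝ ↦ f q.1 - q.2 * s + c) (𝓝 p ×ˢ 𝓝[K] 0) (𝓝 w) := by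
    have hcont : Continuous fun q : E × ℝ ↦ f q.1 - q.2 * s + c := by fun_prop
    have hlim := hcont.tendsto (p, 0)
    rw [zero_mul, sub_zero, hvalue, nhds_prod_eq] at hlim
    exact hlim.mono_left (prod_mono_right _ nhdsWithin_le_nhds)
  filter_upwards [haffine.eventually_const_lt (sub_lt_comm.1 hzm),
    tendsto_snd.eventually (hψ m hmψ)] with q hq hψq x hx
  have hle := hminorant (q.1 - q.2 • x)
  rw [map_sub, map_smul, mem_singleton_iff.1 hx, smul_eq_mul] at hle
  linarith

lemma eventually_forall_lt_sub_smul_add (hφcoer : Tendsto φ (cobounded E) atTop)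
    (hψ : BddBelow (ψ '' K)) {S : Set E} {p : E} {z : ℝ}
    (hnear : ∀ᶠ q in 𝓝 p ×ˢ 𝓝[K] (0 : ℝ), ∀ x ∈ S, z < φ (q.1 - q.2 • x) + ψ q.2)
    {ι : Type*} {L : Filter ι} {u x : ι → E} (hu : Tendsto u L (𝓝 p))
    (hx : Tendsto x L (cobounded E)) (hxS : ∀ i, x i ∈ S) :
    ∀ᶠ i in L, ∀ l ∈ K, z < φ (u i - l • x i) + ψ l := by
  obtain ⟨m, hm⟩ := hψ
  obtain ⟨U, hU, V, hV, hUV⟩ := eventually_prod_iff.1 hnear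
  obtain ⟨δ, hδ, hδV⟩ := Metric.mem_nhdsWithin_iff.1 hV
  have hfar := eventually_prod_principal_iff.1 ((tendsto_sub_smul_cobounded (𝕜 := ℝ)
    hu.norm.isBoundedUnder_le hx hδ).eventually (hφcoer.eventually_gt_atTop (z - m)))
  filter_upwards [hu.eventually hU, hfar] with i hiU hifar l hl
  rcases lt_or_ge ‖l‖ δ with hlδ | hlδ
  · exact hUV hiU (hδV ⟨mem_ball_zero_iff.2 hlδ, hl⟩) (x i) (hxS i)
  · linarith [hifar l hlδ, hm (mem_image_of_mem ψ hl)]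

lemma exists_forall_lt_sub_smul_add (hE : ¬ FiniteDimensional ℝ E) {T : E →L[ℝ] E}
    (hTcpt : IsCompactOperator T) (hT0 : T ≠ 0) (hφcont : Continuous φ)
    (hφconv : ConvexOn ℝ univ φ) (hφcoer : Tendsto φ (cobounded E) atTop)
    (hψlsc : LowerSemicontinuousWithinAt ψ K 0) (hψbdd : BddBelow (ψ '' K)) {r z : ℝ}
    (hr : φ 0 < r) (hz : z < r + ψ 0) :
    ∃ x, φ (T x) < r ∧ ∀ l ∈ K, z < φ (T x - l • x) + ψ l := by
  obtain ⟨s, hs, hsr⟩ := exists_between (max_lt hr (sub_lt_iff_lt_add.2 hz))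
  obtain ⟨h0s, hzs⟩ := max_lt_iff.1 hs
  obtain ⟨x₀, hx₀⟩ : ∃ x₀, φ (T x₀) = s := by
    obtain ⟨v, hv⟩ := DFunLike.ne_iff.1 hT0
    obtain ⟨t, ht⟩ := exists_apply_smul_eq_of_coercive hφcont hφcoer hv h0s.le
    exact ⟨t • v, by rw [map_smul, ht]⟩
  obtain ⟨f, hf⟩ := exists_dual_eventually_forall_lt_sub_smul_add hφcont.lowerSemicontinuous hφconv
    hψlsc (hx₀ ▸ sub_lt_iff_lt_add.1 hzs)
  obtain ⟨y, hfy, hy, hTy⟩ := exists_seq_mem_ker_tendsto_cobounded_map_tendsto_zero hE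
    (T := T.toLinearMap) hTcpt f.toLinearMap
  have hx : Tendsto (fun n ↦ x₀ + y n) atTop (cobounded E) :=
    (tendsto_const_add_cobounded x₀).comp hy
  have hfx : ∀ n, x₀ + y n ∈ f ⁻¹' {f x₀} := fun n ↦ (map_add f x₀ (y n)).trans
    (add_eq_left.2 (hfy n))
  have hTx : Tendsto (fun n ↦ T (x₀ + y n)) atTop (𝓝 (T x₀)) := by
    simpa using hTy.const_add (T x₀)
  have hlevel : ∀ᶠ n in atTop, φ (T (x₀ + y n)) < r :=
    ((hφcont.tendsto _).comp hTx).eventually_lt_const (hx₀.trans_lt hsr)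
  obtain ⟨n, hn⟩ := (hlevel.and
    (eventually_forall_lt_sub_smul_add hφcoer hψbdd (hf (f x₀)) hTx hx hfx)).exists
  exact ⟨x₀ + y n, hn⟩

theorem ricceri_application_general (hE : ¬ FiniteDimensional ℝ E) {T : E →L[ℝ] E}
    (hTcpt : IsCompactOperator T) (hT0 : T ≠ 0) (hφcont : Continuous φ)
    (hφconv : ConvexOn ℝ univ φ) (hφcoer : Tendsto φ (cobounded E) atTop) (h0K : 0 ∈ K)
    (hψlsc : LowerSemicontinuousWithinAt ψ K 0) (hψbdd : BddBelow (ψ '' K)) {r : ℝ}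
    (hr : φ 0 < r) :
    (⨆ x ∈ {x : E | φ (T x) ≤ r}, ⨅ l ∈ K, ((φ (T x - l • x) + ψ l : ℝ) : EReal)) =
      ((r + ψ 0 : ℝ) : EReal) := by
  apply le_antisymm
  · refine iSup₂_le fun x hx ↦ (iInf₂_le 0 h0K).trans (EReal.coe_le_coe_iff.2 ?_)
    simpa using hx
  · refine EReal.ge_of_forall_gt_iff_ge.1 fun z hz ↦ ?_
    obtain ⟨x, hx, hxK⟩ := exists_forall_lt_sub_smul_add hE hTcpt hT0 hφcont hφconv hφcoer hψlsc
      hψbdd hr (EReal.coe_lt_coe_iff.1 hz)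
    exact le_iSup₂_of_le x hx.le (le_iInf₂ fun l hl ↦ EReal.coe_le_coe_iff.2 (hxK l hl).le)

end RealNormedSpace

/-- **Ricceri's application of the minimax theorem.**
Let `E` be an infinite-dimensional reflexive real Banach space, `T : E → E` a
non-zero compact linear operator, `φ : E → ℝ` a lower semicontinuous, convex and
coercive functional, `I = [a,b]` a compact interval containing `0`, and
`ψ : I → ℝ` lower semicontinuous and convex. Then for each `r > φ(0)`,
`sup_{x∈X} inf_{λ∈I} (φ(T x − λ x) + ψ(λ)) = r + ψ(0)`,
where `X = {x ∈ E : φ(T x) ≤ r}`. -/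
theorem ricceri_application
    {E : Type*} [NormedAddCommGroup E] [NormedSpace ℝ E] [CompleteSpace E]
    (hinfdim : ¬ FiniteDimensional ℝ E)
    (hrefl : Function.Surjective (NormedSpace.inclusionInDoubleDual ℝ E))
    (T : E →L[ℝ] E) (hTcpt : IsCompactOperator T) (hT0 : T ≠ 0)
    (φ : E → ℝ) (hφlsc : LowerSemicontinuous φ) (hφconv : ConvexOn ℝ Set.univ φ)
    (hφcoer : Filter.Tendsto φ (Filter.comap norm Filter.atTop) Filter.atTop)
    (a b : ℝ) (hab : a ≤ b) (h0I : (0 : ℝ) ∈ Set.Icc a b)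
    (ψ : ℝ → ℝ) (hψlsc : LowerSemicontinuousOn ψ (Set.Icc a b))
    (hψconv : ConvexOn ℝ (Set.Icc a b) ψ)
    (r : ℝ) (hr : φ 0 < r) :
    (⨆ x ∈ {x : E | φ (T x) ≤ r}, ⨅ l ∈ Set.Icc a b,
        ((φ (T x - l • x) + ψ l : ℝ) : EReal)) = ((r + ψ 0 : ℝ) : EReal) := by
  exact ricceri_application_general hinfdim hTcpt hT0
    (continuous_of_convexOn_of_lowerSemicontinuous hφconv hφlsc) hφconv
    (comap_norm_atTop (E := E) ▸ hφcoer) h0I (hψlsc 0 h0I)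
    (hψlsc.bddBelow_of_isCompact isCompact_Icc) hr
end

section
/- Let E be an infinite-dimensional reflexive real Banach space, let X be the open unit ball of E, and let φ be a continuous linear functional on E with ‖φ‖ = 1 (operator norm). Define f : X × [0,1] → ℝ by f(x,λ) = |1/(1 − φ(x)) − λ((1/(1 − φ(x)))² + 1)|. Then sup_{x∈X} inf_{λ∈[0,1]} f(x,λ) = 0, while for every λ ∈ [0,1] the function f(·,λ) is unbounded above on X, so that inf_{λ∈[0,1]} sup_{x∈X} f(x,λ) = +∞ (in the extended reals). -/
/-!
Put `t = 1 / (1 - φ x)`, which is positive on the open unit ball. Since `0 ≤ t ≤ t ^ 2 + 1`, the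
choice `l = t / (t ^ 2 + 1)` lies in `[0, 1]` and makes the expression vanish. For fixed `l`, on
the other hand, `t - l * (t ^ 2 + 1)` is a polynomial in `t` whose linear coefficient is `1`, so it
is nonconstant and its absolute value tends to `∞` with `t`; and `t` is unbounded on the ball
because `‖φ‖ = 1` makes `1` the supremum of `φ` there.
-/

open Filter Metric Set

theorem biSup_coe_ereal_eq_top {α : Type*} {s : Set α} {g : α → ℝ}
    (hg : ∀ M : ℝ, ∃ x ∈ s, M < g x) : ⨆ x ∈ s, (g x : EReal) = ⊤ := by
  refine (EReal.eq_top_iff_forall_lt _).mpr fun M => ?_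
  obtain ⟨x, hx, hMx⟩ := hg M
  exact (EReal.coe_lt_coe_iff.mpr hMx).trans_le (le_iSup₂_of_le x hx le_rfl)

theorem biInf_Icc_abs_sub_mul_eq_zero {a b : ℝ} (ha : 0 ≤ a) (hab : a ≤ b) :
    ⨅ l ∈ Icc (0 : ℝ) 1, ((|a - l * b| : ℝ) : EReal) = 0 := by
  have quotient_mem : a / b ∈ Icc (0 : ℝ) 1 :=
    ⟨div_nonneg ha (ha.trans hab), div_le_one_of_le₀ hab (ha.trans hab)⟩
  have quotient_mul : a / b * b = a :=
    div_mul_cancel_of_imp fun hb => le_antisymm (hab.trans hb.le) ha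
  apply le_antisymm
  · refine iInf₂_le_of_le (a / b) quotient_mem ?_
    rw [quotient_mul, sub_self, abs_zero, EReal.coe_zero]
  · exact le_iInf₂ fun l _ => EReal.coe_nonneg.mpr (abs_nonneg _)

theorem tendsto_abs_sub_mul_sq_add_one_atTop (l : ℝ) :
    Tendsto (fun t : ℝ => |t - l * (t ^ 2 + 1)|) atTop atTop := by
  let P : Polynomial ℝ := .X - .C l * (.X ^ 2 + 1)
  have coeff_one : P.coeff 1 = 1 := by simp [P, Polynomial.coeff_X_pow, Polynomial.coeff_one]
  have degree_pos : 0 < P.degree :=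
    zero_lt_one.trans_le (Polynomial.le_degree_of_ne_zero (coeff_one ▸ one_ne_zero))
  simpa [P] using P.abs_tendsto_atTop degree_pos

section Functional

variable {E : Type*} [NormedAddCommGroup E] [NormedSpace ℝ E] {φ : E →L[ℝ] ℝ}

theorem exists_mem_ball_lt_apply_of_lt_opNorm {r : ℝ} (hr : r < ‖φ‖) :
    ∃ x ∈ ball (0 : E) 1, r < φ x := by
  obtain ⟨x, hx, hrx⟩ := φ.exists_lt_apply_of_lt_opNorm hr
  rcases lt_abs.mp hrx with hpos | hneg
  · exact ⟨x, mem_ball_zero_iff.mpr hx, hpos⟩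
  · exact ⟨-x, by simpa using hx, by rwa [map_neg]⟩

theorem one_sub_apply_pos_of_mem_ball (hφ : ‖φ‖ ≤ 1) {x : E} (hx : x ∈ ball (0 : E) 1) :
    0 < 1 - φ x :=
  sub_pos.mpr <| calc
    φ x ≤ ‖φ x‖ := Real.le_norm_self _
    _ ≤ 1 * ‖x‖ := φ.le_of_opNorm_le hφ x
    _ < 1 := by rwa [one_mul, ← mem_ball_zero_iff]

theorem exists_mem_ball_lt_one_div_one_sub_apply (hφ : ‖φ‖ = 1) {N : ℝ} (hN : 0 < N) :
    ∃ x ∈ ball (0 : E) 1, N < 1 / (1 - φ x) := by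
  have one_sub_lt_norm : 1 - 1 / N < ‖φ‖ := hφ ▸ sub_lt_self 1 (one_div_pos.mpr hN)
  obtain ⟨x, hx, hNx⟩ := exists_mem_ball_lt_apply_of_lt_opNorm one_sub_lt_norm
  exact ⟨x, hx, (lt_one_div hN (one_sub_apply_pos_of_mem_ball hφ.le hx)).mpr (sub_lt_comm.mp hNx)⟩

theorem exists_mem_ball_lt_comp_one_div_one_sub_apply {β : Type*} [Preorder β] [NoMaxOrder β]
    (hφ : ‖φ‖ = 1) {g : ℝ → β} (hg : Tendsto g atTop atTop) (M : β) :
    ∃ x ∈ ball (0 : E) 1, M < g (1 / (1 - φ x)) := by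
  obtain ⟨N, hN, hNg⟩ := (atTop_basis_Ioi' (0 : ℝ)).eventually_iff.mp (hg.eventually_gt_atTop M)
  obtain ⟨x, hx, hNx⟩ := exists_mem_ball_lt_one_div_one_sub_apply hφ hN
  exact ⟨x, hx, hNg hNx⟩

theorem biInf_Icc_abs_one_div_one_sub_apply_eq_zero (hφ : ‖φ‖ ≤ 1) {x : E}
    (hx : x ∈ ball (0 : E) 1) :
    ⨅ l ∈ Icc (0 : ℝ) 1,
      ((|1 / (1 - φ x) - l * ((1 / (1 - φ x)) ^ 2 + 1)| : ℝ) : EReal) = 0 := by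
  have ht : 0 < 1 / (1 - φ x) := one_div_pos.mpr (one_sub_apply_pos_of_mem_ball hφ hx)
  exact biInf_Icc_abs_sub_mul_eq_zero ht.le (by nlinarith)

theorem ricceri_example_open_ball_general (hφ : ‖φ‖ = 1) :
    (⨆ x ∈ ball (0 : E) 1, ⨅ l ∈ Icc (0 : ℝ) 1,
        ((|1 / (1 - φ x) - l * ((1 / (1 - φ x)) ^ 2 + 1)| : ℝ) : EReal)) = 0 ∧
    (∀ l M : ℝ, ∃ x ∈ ball (0 : E) 1,
        M < |1 / (1 - φ x) - l * ((1 / (1 - φ x)) ^ 2 + 1)|) ∧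
    (⨅ l : ℝ, ⨆ x ∈ ball (0 : E) 1,
        ((|1 / (1 - φ x) - l * ((1 / (1 - φ x)) ^ 2 + 1)| : ℝ) : EReal)) = ⊤ := by
  have unbounded (l : ℝ) := exists_mem_ball_lt_comp_one_div_one_sub_apply hφ
    (tendsto_abs_sub_mul_sq_add_one_atTop l)
  refine ⟨?_, unbounded, iInf_eq_top.mpr fun l => biSup_coe_ereal_eq_top (unbounded l)⟩
  rw [biSup_congr fun x hx => biInf_Icc_abs_one_div_one_sub_apply_eq_zero hφ.le hx]
  exact biSup_const (nonempty_ball.mpr one_pos)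

end Functional

/-- **Example 2 of Ricceri's paper.**
Let `E` be an infinite-dimensional reflexive real Banach space, `X` the open
unit ball of `E`, and `φ` a continuous linear functional with `‖φ‖ = 1`.
Define `f(x,λ) = |1/(1 − φ(x)) − λ((1/(1 − φ(x)))² + 1)|` on `X × [0,1]`. Then
`sup_{x∈X} inf_{λ∈[0,1]} f(x,λ) = 0`, while for every `λ ∈ [0,1]` the function
`f(·,λ)` is unbounded above on `X`, so that
`inf_{λ∈[0,1]} sup_{x∈X} f(x,λ) = +∞`. -/
theorem ricceri_example_open_ball
    {E : Type*} [NormedAddCommGroup E] [NormedSpace ℝ E] [CompleteSpace E]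
    (hinfdim : ¬ FiniteDimensional ℝ E)
    (hrefl : Function.Surjective (NormedSpace.inclusionInDoubleDual ℝ E))
    (φ : E →L[ℝ] ℝ) (hφ : ‖φ‖ = 1) :
    (⨆ x ∈ Metric.ball (0 : E) 1, ⨅ l ∈ Set.Icc (0 : ℝ) 1,
        ((|1 / (1 - φ x) - l * ((1 / (1 - φ x)) ^ 2 + 1)| : ℝ) : EReal)) = (0 : EReal) ∧
    (∀ l ∈ Set.Icc (0 : ℝ) 1, ∀ M : ℝ, ∃ x ∈ Metric.ball (0 : E) 1,
        M < |1 / (1 - φ x) - l * ((1 / (1 - φ x)) ^ 2 + 1)|) ∧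
    (⨅ l ∈ Set.Icc (0 : ℝ) 1, ⨆ x ∈ Metric.ball (0 : E) 1,
        ((|1 / (1 - φ x) - l * ((1 / (1 - φ x)) ^ 2 + 1)| : ℝ) : EReal)) = (⊤ : EReal) := by
  obtain ⟨sup_inf, unbounded, inf_sup⟩ := ricceri_example_open_ball_general hφ
  exact ⟨sup_inf, fun l _ => unbounded l, iInf₂_eq_top.mpr fun l _ => iInf_eq_top.mp inf_sup l⟩
end

section
/- Let E be an infinite-dimensional reflexive real Banach space, T : E → E a non-zero compact linear operator, φ : E → ℝ a lower semicontinuous, convex and coercive functional, and r > φ(0); set X = {x ∈ E : φ(T(x)) ≤ r}. Then for every real λ ≠ 0, the function x ↦ φ(T(x) − λx) is unbounded above on X; that is, sup_{x∈X} φ(T(x) − λx) = +∞. -/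
/-!
Suppose `φ (T x - l • x) ≤ M` on `X`. The closed convex absorbing set `{φ ≤ r}` contains a positive
multiple of the closure of the image of the unit ball under `T`, by Baire's theorem in that compact
convex set, so `X` is a neighbourhood of `0`. For `x` near `0`, `-(l / 2) • x` is the midpoint of
`T x - l • x` and `T (-x)`, which bounds `φ` above near `0`; being convex, `φ` is continuous. A
compact operator on an infinite-dimensional space is not bounded below, so there are points `x` with
`‖x‖ → ∞` and `T x → 0`. By continuity they eventually lie in `X`, while coercivity forces
`φ (T x - l • x) → ∞`.
-/

open Bornology Filter Metric Set Topology

section ConvexAbsorbing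

variable {F : Type*} [AddCommGroup F] [Module ℝ F]

lemma exists_pos_map_smul_le {φ : F → ℝ} (hφ : ConvexOn ℝ univ φ) {r : ℝ} (hr : φ 0 < r) (x : F) :
    ∃ t : ℝ, 0 < t ∧ φ (t • x) ≤ r := by
  have hlim : Tendsto (fun t : ℝ ↦ t * φ x + (1 - t) * φ 0) (𝓝[>] 0) (𝓝 (φ 0)) :=
    (Continuous.tendsto' (by fun_prop) 0 _ (by simp)).mono_left nhdsWithin_le_nhds
  obtain ⟨t, htr, ht0, ht1⟩ :=
    ((hlim.eventually_le_const hr).and (Ioo_mem_nhdsGT zero_lt_one)).exists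
  refine ⟨t, ht0, le_trans ?_ htr⟩
  simpa using hφ.2 (mem_univ x) (mem_univ 0) ht0.le (sub_nonneg.2 ht1.le) (by ring)

variable [TopologicalSpace F] [IsTopologicalAddGroup F] [ContinuousSMul ℝ F]
  {C K : Set F}

lemma exists_pos_eventually_smul_mem_of_isCompact (hCclosed : IsClosed C) (hCconv : Convex ℝ C)
    (hCabs : ∀ x, ∃ t : ℝ, 0 < t ∧ t • x ∈ C) (hK : IsCompact K) (hKne : K.Nonempty) :
    ∃ y ∈ K, ∃ a : ℝ, 0 < a ∧ ∀ᶠ z in 𝓝[K] y, a • z ∈ C := by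
  have : Nonempty K := hKne.to_subtype
  have : CompactSpace K := isCompact_iff_compactSpace.1 hK
  have hzero : (0 : F) ∈ C := by simpa using (hCabs 0).choose_spec.2
  have hcover (z : K) : ∃ n : ℕ, (1 / ((n : ℝ) + 1)) • (z : F) ∈ C := by
    obtain ⟨t, ht, htz⟩ := hCabs z
    obtain ⟨n, hn⟩ := exists_nat_one_div_lt ht
    refine ⟨n, ?_⟩
    have := hCconv.smul_mem_of_zero_mem hzero htz
      (t := 1 / ((n : ℝ) + 1) / t) ⟨by positivity, (div_le_one ht).2 hn.le⟩
    rwa [smul_smul, div_mul_cancel₀ _ ht.ne'] at this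
  obtain ⟨n, y, hy⟩ := nonempty_interior_of_iUnion_of_closed
    (f := fun n : ℕ ↦ {z : K | (1 / ((n : ℝ) + 1)) • (z : F) ∈ C})
    (fun n ↦ hCclosed.preimage (by fun_prop)) (iUnion_eq_univ_iff.2 hcover)
  exact ⟨y, y.2, 1 / ((n : ℝ) + 1), by positivity,
    preimage_coe_mem_nhds_subtype.1 (mem_interior_iff_mem_nhds.1 hy)⟩

lemma exists_pos_forall_smul_mem_of_isCompact (hCclosed : IsClosed C) (hCconv : Convex ℝ C)
    (hCabs : ∀ x, ∃ t : ℝ, 0 < t ∧ t • x ∈ C) (hK : IsCompact K) (hKconv : Convex ℝ K) :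
    ∃ t : ℝ, 0 < t ∧ ∀ k ∈ K, t • k ∈ C := by
  obtain rfl | hKne := K.eq_empty_or_nonempty
  · exact ⟨1, one_pos, by simp⟩
  obtain ⟨y, hyK, a, ha, hay⟩ :=
    exists_pos_eventually_smul_mem_of_isCompact hCclosed hCconv hCabs hK hKne
  obtain ⟨b, hb, hby⟩ := hCabs (-y)
  have hshrink : ∀ᶠ t : ℝ in 𝓝 0, ∀ k ∈ K, AffineMap.lineMap y k t ∈ K →
      a • AffineMap.lineMap y k t ∈ C := by
    refine hK.eventually_forall_of_forall_eventually fun k _ ↦ ?_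
    have hlim : Tendsto (fun p : ℝ × F ↦ AffineMap.lineMap y p.2 p.1) (𝓝 (0, k)) (𝓝 y) := by
      refine Continuous.tendsto' ?_ _ _ (by simp)
      simp only [AffineMap.lineMap_apply_module']
      fun_prop
    exact hlim.eventually (eventually_nhdsWithin_iff.1 hay)
  obtain ⟨t, ht0, htC, ht1⟩ := (hshrink.and (eventually_lt_nhds zero_lt_one)).exists_gt
  have hden : 0 < b + a * (1 - t) := add_pos hb (mul_pos ha (sub_pos.2 ht1))
  refine ⟨a * b * t / (b + a * (1 - t)), by positivity, fun k hk ↦ ?_⟩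
  have hz := htC k hk (hKconv.lineMap_mem hyK hk ⟨ht0.le, ht1.le⟩)
  -- The weights are chosen so that the multiples of `y` cancel.
  have hcombo := hCconv hz hby (a := b / (b + a * (1 - t))) (b := a * (1 - t) / (b + a * (1 - t)))
    (by positivity) (div_nonneg (mul_nonneg ha.le (sub_nonneg.2 ht1.le)) hden.le) (by field_simp)
  convert hcombo using 1
  rw [AffineMap.lineMap_apply_module]
  module

end ConvexAbsorbing

lemma tendsto_sub_smul_cobounded_s10 {ι 𝕜 E : Type*} [NormedField 𝕜] [SeminormedAddCommGroup E]
    [NormedSpace 𝕜 E] {L : Filter ι} {u v : ι → E} {y : E} {l : 𝕜} (hv : Tendsto v L (𝓝 y))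
    (hu : Tendsto u L (cobounded E)) (hl : l ≠ 0) :
    Tendsto (fun i ↦ v i - l • u i) L (cobounded E) := by
  rw [← tendsto_norm_atTop_iff_cobounded] at hu ⊢
  refine tendsto_atTop_mono (fun i ↦ ?_)
    ((hu.const_mul_atTop (norm_pos_iff.2 hl)).atTop_add hv.norm.neg)
  rw [← norm_smul, ← sub_eq_add_neg, norm_sub_rev (v i)]
  exact norm_sub_norm_le _ _

section CompactOperator

lemma preimage_mem_nhds_zero_of_isCompactOperator {E F : Type*} [SeminormedAddCommGroup E]
    [NormedSpace ℝ E] [AddCommGroup F] [Module ℝ F] [TopologicalSpace F]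
    [IsTopologicalAddGroup F] [ContinuousSMul ℝ F] {T : E →ₗ[ℝ] F}
    (hT : IsCompactOperator T) {C : Set F} (hCclosed : IsClosed C) (hCconv : Convex ℝ C)
    (hCabs : ∀ x, ∃ t : ℝ, 0 < t ∧ t • x ∈ C) :
    T ⁻¹' C ∈ 𝓝 0 := by
  obtain ⟨K, hK, hTK⟩ := hT.image_closedBall_subset_compact 1
  obtain ⟨t, ht, htC⟩ := exists_pos_forall_smul_mem_of_isCompact hCclosed hCconv hCabs
    (hK.closure_of_subset hTK) ((convex_closedBall 0 1).linear_image T).closure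
  filter_upwards [closedBall_mem_nhds (0 : E) ht] with x hx
  have hball : t⁻¹ • x ∈ closedBall (0 : E) 1 := by
    rw [mem_closedBall_zero_iff] at hx ⊢
    rwa [norm_smul, norm_inv, Real.norm_of_nonneg ht.le, inv_mul_le_one₀ ht]
  simpa [ht.ne'] using htC _ (subset_closure (mem_image_of_mem T hball))

variable {𝕜 E F : Type*} [NontriviallyNormedField 𝕜] [CompleteSpace 𝕜] [NormedAddCommGroup E]
  [NormedSpace 𝕜 E] [SeminormedAddCommGroup F] [NormedSpace 𝕜 F]

lemma exists_one_le_norm_map_lt_of_isCompactOperator (hE : ¬ FiniteDimensional 𝕜 E)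
    {T : E →ₗ[𝕜] F} (hT : IsCompactOperator T) {ε : ℝ} (hε : 0 < ε) :
    ∃ x, 1 ≤ ‖x‖ ∧ ‖T x‖ < ε := by
  obtain ⟨R, u, -, huR, husep⟩ := exists_seq_norm_le_one_le_norm_sub hE
  obtain ⟨K, hK, hTK⟩ := hT.image_closedBall_subset_compact R
  obtain ⟨_, -, s, hs, hlim⟩ := hK.tendsto_subseq (x := T ∘ u) fun n ↦
    hTK (mem_image_of_mem T (mem_closedBall_zero_iff.2 (huR n)))
  obtain ⟨N, hN⟩ := Metric.cauchySeq_iff.1 hlim.cauchySeq ε hε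
  refine ⟨u (s N) - u (s (N + 1)), husep (hs.injective.ne (Nat.succ_ne_self N).symm), ?_⟩
  simpa [dist_eq_norm] using hN N le_rfl (N + 1) N.le_succ

lemma neBot_cobounded_inf_comap_of_isCompactOperator (hE : ¬ FiniteDimensional 𝕜 E)
    {T : E →ₗ[𝕜] F} (hT : IsCompactOperator T) : (cobounded E ⊓ comap T (𝓝 0)).NeBot := by
  refine ((hasBasis_cobounded_norm (E := E)).inf (nhds_basis_ball.comap T)).neBot_iff.2 ?_
  rintro ⟨N, ε⟩ ⟨-, hε⟩
  obtain ⟨c, hc⟩ := NormedField.exists_lt_norm 𝕜 (max N 0)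
  have hc0 : 0 < ‖c‖ := (le_max_right N 0).trans_lt hc
  obtain ⟨x, hx, hTx⟩ := exists_one_le_norm_map_lt_of_isCompactOperator hE hT (div_pos hε hc0)
  refine ⟨c • x, ?_, ?_⟩
  · calc N ≤ ‖c‖ := (le_max_left N 0).trans hc.le
      _ ≤ ‖c‖ * ‖x‖ := le_mul_of_one_le_right hc0.le hx
      _ = ‖c • x‖ := (norm_smul c x).symm
  · rw [mem_preimage, mem_ball_zero_iff, map_smul, norm_smul, mul_comm]
    exact (lt_div_iff₀ hc0).1 hTx

end CompactOperator

section Ricceri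

variable {E : Type*} [NormedAddCommGroup E] [NormedSpace ℝ E] {T : E →ₗ[ℝ] E} {φ : E → ℝ}
  {l r : ℝ}

lemma continuous_of_forall_map_sub_smul_le (hφ : ConvexOn ℝ univ φ)
    (hX : {x | φ (T x) ≤ r} ∈ 𝓝 0) (hl : l ≠ 0) {M : ℝ}
    (hM : ∀ x, φ (T x) ≤ r → φ (T x - l • x) ≤ M) : Continuous φ := by
  have hcont_iff : ContinuousOn φ univ ↔ ∃ x₀ ∈ univ, (𝓝 x₀).IsBoundedUnder (· ≤ ·) φ :=
    (hφ.continuousOn_tfae isOpen_univ univ_nonempty).out 1 3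
  suffices hbdd : ∀ᶠ y in 𝓝 0, φ y ≤ M / 2 + r / 2 from
    continuousOn_univ.1 (hcont_iff.2 ⟨0, mem_univ 0, isBoundedUnder_of_eventually_le hbdd⟩)
  have hscale (c : ℝ) : ∀ᶠ y in 𝓝 (0 : E), φ (T (c • y)) ≤ r :=
    (Continuous.tendsto' (by fun_prop) 0 0 (smul_zero c)).eventually hX
  filter_upwards [hscale (-2 / l), hscale (2 / l)] with y hneg hpos
  have hmid : y = (1 / 2 : ℝ) • (T ((-2 / l) • y) - l • (-2 / l) • y)
      + (1 / 2 : ℝ) • T ((2 / l) • y) := by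
    rw [smul_smul, mul_div_cancel₀ _ hl, map_smul, map_smul]
    module
  calc φ y ≤ (1 / 2) * φ (T ((-2 / l) • y) - l • (-2 / l) • y) + (1 / 2) * φ (T ((2 / l) • y)) := by
        conv_lhs => rw [hmid]
        exact hφ.2 (mem_univ _) (mem_univ _) (by norm_num) (by norm_num) (by norm_num)
    _ ≤ M / 2 + r / 2 := by linarith [hM _ hneg]

theorem ricceri_sup_shifted_eq_top_general (hE : ¬ FiniteDimensional ℝ E)
    (hT : IsCompactOperator T) (hφlsc : LowerSemicontinuous φ) (hφconv : ConvexOn ℝ univ φ)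
    (hφcoer : Tendsto φ (cobounded E) atTop) (hr : φ 0 < r) (hl : l ≠ 0) :
    ⨆ x ∈ {x : E | φ (T x) ≤ r}, ((φ (T x - l • x) : ℝ) : EReal) = ⊤ := by
  refine (EReal.eq_top_iff_forall_lt _).2 fun M ↦ lt_of_not_ge fun hsup ↦ ?_
  have hM (x : E) (hx : φ (T x) ≤ r) : φ (T x - l • x) ≤ M :=
    EReal.coe_le_coe_iff.1 (iSup₂_le_iff.1 hsup x hx)
  have hX : {x | φ (T x) ≤ r} ∈ 𝓝 0 :=
    preimage_mem_nhds_zero_of_isCompactOperator hT (hφlsc.isClosed_preimage r)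
      (by simpa [preimage] using hφconv.convex_le r) (exists_pos_map_smul_le hφconv hr)
  have hφcont : Continuous φ := continuous_of_forall_map_sub_smul_le hφconv hX hl hM
  have hTzero : Tendsto T (cobounded E ⊓ comap T (𝓝 0)) (𝓝 0) :=
    tendsto_comap.mono_left inf_le_right
  have hmem : ∀ᶠ x in cobounded E ⊓ comap T (𝓝 0), φ (T x) ≤ r :=
    hTzero.eventually (hφcont.continuousAt.eventually_le_const hr)
  have hlarge : ∀ᶠ x in cobounded E ⊓ comap T (𝓝 0), M < φ (T x - l • x) :=
    (hφcoer.comp (tendsto_sub_smul_cobounded_s10 hTzero inf_le_left hl)).eventually_gt_atTop M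
  have := neBot_cobounded_inf_comap_of_isCompactOperator hE hT
  obtain ⟨x, hxX, hxM⟩ := (hmem.and hlarge).exists
  exact (hM x hxX).not_gt hxM

end Ricceri

/-- Let `E` be an infinite-dimensional reflexive real Banach space,
`T : E → E` a non-zero compact linear operator, `φ : E → ℝ` a lower
semicontinuous, convex and coercive functional, `r > φ(0)`, and
`X = {x ∈ E : φ(T x) ≤ r}`. Then for every real `λ ≠ 0`,
`sup_{x∈X} φ(T x − λ x) = +∞`. -/
theorem ricceri_sup_shifted_eq_top
    {E : Type*} [NormedAddCommGroup E] [NormedSpace ℝ E] [CompleteSpace E]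
    (hinfdim : ¬ FiniteDimensional ℝ E)
    (hrefl : Function.Surjective (NormedSpace.inclusionInDoubleDual ℝ E))
    (T : E →L[ℝ] E) (hTcpt : IsCompactOperator T) (hT0 : T ≠ 0)
    (φ : E → ℝ) (hφlsc : LowerSemicontinuous φ) (hφconv : ConvexOn ℝ Set.univ φ)
    (hφcoer : Filter.Tendsto φ (Filter.comap norm Filter.atTop) Filter.atTop)
    (r : ℝ) (hr : φ 0 < r) :
    ∀ l : ℝ, l ≠ 0 →
      (⨆ x ∈ {x : E | φ (T x) ≤ r}, ((φ (T x - l • x) : ℝ) : EReal)) = (⊤ : EReal) := by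
  intro l hl
  exact ricceri_sup_shifted_eq_top_general (T := (T : E →ₗ[ℝ] E)) hinfdim hTcpt hφlsc hφconv
    (comap_norm_atTop (E := E) ▸ hφcoer) hr hl
end

section
/- Let X and Y be topological spaces with X connected, and let F : X → Set Y be a multifunction with non-empty values which is lower semicontinuous, meaning that for every open set V ⊆ Y the set {x ∈ X : F(x) ∩ V ≠ ∅} is open in X. Assume that the set {x ∈ X : F(x) is connected} is dense in X. Then the graph {(x,y) ∈ X × Y : y ∈ F(x)} is a connected subset of X × Y. -/
/-!
Lower semicontinuity makes the projection from the graph of `F` to `X` an open map, and the fibre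
of this projection over `x` is a copy of `F x`. So it suffices to see that a space admitting an
open surjection onto a connected space, with connected fibres over a dense set, is connected. If two
non-empty open sets cover the total space, their images are open and cover the base, hence
overlap in a non-empty open set. By density the overlap contains a point with connected fibre;
this fibre meets both open sets, hence their intersection.
-/

open Set Function Topology

theorem preconnectedSpace_of_isOpenMap_of_dense_isPreconnected_fiber
    {E B : Type*} [TopologicalSpace E] [TopologicalSpace B] [PreconnectedSpace B] {f : E → B}
    (hopen : IsOpenMap f) (hsurj : Surjective f)
    (hfiber : Dense {b | IsPreconnected (f ⁻¹' {b})}) : PreconnectedSpace E := by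
  refine ⟨fun u v hu hv hcover ⟨a, _, hau⟩ ⟨c, _, hcv⟩ ↦ ?_⟩
  have himage_cover : univ ⊆ f '' u ∪ f '' v := by
    rw [← image_union, ← hsurj.range_eq, ← image_univ]
    exact image_mono hcover
  have hoverlap : (f '' u ∩ f '' v).Nonempty := by
    simpa only [univ_inter] using isPreconnected_univ _ _ (hopen u hu) (hopen v hv) himage_cover
      ⟨f a, mem_univ _, mem_image_of_mem f hau⟩ ⟨f c, mem_univ _, mem_image_of_mem f hcv⟩
  obtain ⟨b, ⟨⟨p, hpu, hpb⟩, ⟨q, hqv, hqb⟩⟩, hb⟩ :=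
    hfiber.inter_open_nonempty _ ((hopen u hu).inter (hopen v hv)) hoverlap
  exact (hb u v hu hv ((subset_univ _).trans hcover) ⟨p, hpb, hpu⟩ ⟨q, hqb, hqv⟩).mono
    (inter_subset_inter_left _ (subset_univ _))

/-- The graph of a set-valued map `F : X → Set Y`, as a subset of the product `X × Y`. -/
def setValuedGraph {X Y : Type*} (F : X → Set Y) : Set (X × Y) :=
  {p | p.2 ∈ F p.1}

namespace setValuedGraph

variable {X Y : Type*} {F : X → Set Y}

/-- The projection of the graph onto the domain; its fibre over `x` is a copy of `F x`. -/
def proj (F : X → Set Y) (p : setValuedGraph F) : X :=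
  p.1.1

theorem surjective_proj (hne : ∀ x, (F x).Nonempty) : Surjective (proj F) := fun x ↦
  let ⟨y, hy⟩ := hne x
  ⟨⟨(x, y), hy⟩, rfl⟩

theorem image_val_proj_fiber (F : X → Set Y) (x : X) :
    Subtype.val '' (proj F ⁻¹' {x}) = Prod.mk x '' F x := by
  ext ⟨x', y⟩
  constructor
  · rintro ⟨⟨_, hy⟩, rfl, rfl⟩
    exact ⟨y, hy, rfl⟩
  · rintro ⟨_, hy, ⟨⟩⟩
    exact ⟨⟨(x, y), hy⟩, rfl, rfl⟩

variable [TopologicalSpace X] [TopologicalSpace Y]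

theorem isPreconnected_proj_fiber_iff {x : X} :
    IsPreconnected (proj F ⁻¹' {x}) ↔ IsPreconnected (F x) := by
  rw [← IsInducing.subtypeVal.isPreconnected_image, image_val_proj_fiber,
    (isInducing_prodMkRight x).isPreconnected_image]

theorem isOpenMap_proj (hF : LowerHemicontinuous F) : IsOpenMap (proj F) := by
  rw [isOpenMap_iff_nhds_le]
  rintro ⟨⟨x, y⟩, hy⟩ s hs
  obtain ⟨t, ht, hts⟩ := (mem_nhds_subtype _ _ _).1 hs
  obtain ⟨U, V, hU, hxU, hV, hyV, hUV⟩ := mem_nhds_prod_iff'.1 ht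
  filter_upwards [hU.mem_nhds hxU, lowerHemicontinuousAt_iff.1 (hF x) V hV ⟨y, hy, hyV⟩]
    with x' hx'U ⟨y', hy', hy'V⟩
  exact hts (a := ⟨(x', y'), hy'⟩) (hUV ⟨hx'U, hy'V⟩)

end setValuedGraph

/-- **Theorem B of Ricceri's paper** ([3], Proposition 5.3).
Let `X`, `Y` be topological spaces with `X` connected, and let `F : X → Set Y`
be a lower semicontinuous multifunction with non-empty values. If the set
`{x ∈ X : F x is connected}` is dense in `X`, then the graph
`{(x,y) ∈ X × Y : y ∈ F x}` is connected. -/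
theorem ricceri_graph_connected
    {X Y : Type*} [TopologicalSpace X] [TopologicalSpace Y] [ConnectedSpace X]
    (F : X → Set Y) (hne : ∀ x, (F x).Nonempty)
    (hlsc : ∀ V : Set Y, IsOpen V → IsOpen {x : X | (F x ∩ V).Nonempty})
    (hdense : Dense {x : X | IsConnected (F x)}) :
    IsConnected {p : X × Y | p.2 ∈ F p.1} := by
  have hF : LowerHemicontinuous F := lowerHemicontinuous_iff_isOpen_inter_nonempty.2 hlsc
  have hsurj := setValuedGraph.surjective_proj hne
  have hfiber : Dense {x | IsPreconnected (setValuedGraph.proj F ⁻¹' {x})} :=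
    hdense.mono fun _ hx ↦ setValuedGraph.isPreconnected_proj_fiber_iff.2 hx.isPreconnected
  have hpreconnected : PreconnectedSpace (setValuedGraph F) :=
    preconnectedSpace_of_isOpenMap_of_dense_isPreconnected_fiber
      (setValuedGraph.isOpenMap_proj hF) hsurj hfiber
  exact isConnected_iff_connectedSpace.2 { hpreconnected with toNonempty := hsurj.nonempty }
end

section
/- Let X be a topological space, I ⊆ ℝ a compact interval, and S, T ⊆ X × I. For (x,λ) ∈ X × I write S_x = {μ ∈ I : (x,μ) ∈ S} and S^λ = {u ∈ X : (u,λ) ∈ S}, and similarly for T. Assume that S is connected (as a subspace of X × I) and S^λ ≠ ∅ for all λ ∈ I, while T is closed in X × I and T_x is non-empty and connected for all x ∈ X. Then S ∩ T ≠ ∅. -/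
/-!
Close every section `T_x` upwards and downwards in the order. The two resulting sets are closed,
being projections of closed sets along a compact factor, and they cover `X × I` because every
`T_x` is non-empty. The part of `S` at the top of `I` lies in the upward closure and the part at
the bottom in the downward one, so the connected set `S` meets their intersection. That
intersection is `T`, since a connected `T_x` is order-convex.
-/

open Set
open scoped SetRel

section ClosedRelation

variable {X Y Z : Type*} [TopologicalSpace X] [TopologicalSpace Y] [TopologicalSpace Z]

lemma isClosed_setRel_comp_of_subset_prod_isCompact {K : Set Y} {R : SetRel X Y} {Q : SetRel Y Z}
    (hK : IsCompact K) (hRK : R ⊆ univ ×ˢ K) (hR : IsClosed R) (hQ : IsClosed Q) :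
    IsClosed (R ○ Q) := by
  have : CompactSpace K := isCompact_iff_compactSpace.mp hK
  let W : Set ((X × Z) × K) := {w | (w.1.1, (w.2 : Y)) ∈ R ∧ ((w.2 : Y), w.1.2) ∈ Q}
  have hW : IsClosed W := (hR.preimage (by fun_prop)).inter (hQ.preimage (by fun_prop))
  have comp_eq_projection : R ○ Q = Prod.fst '' W := by
    ext p
    constructor
    · rintro ⟨y, hpy, hyp⟩
      exact ⟨(p, ⟨y, (hRK hpy).2⟩), ⟨hpy, hyp⟩, rfl⟩
    · rintro ⟨⟨q, y⟩, ⟨hqy, hyq⟩, rfl⟩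
      exact ⟨y, hqy, hyq⟩
  rw [comp_eq_projection]
  exact isClosedMap_fst_of_compactSpace W hW

end ClosedRelation

section FiberwiseClosure

variable {X Y : Type*}

/-- The points `(x, y)` for which `y` lies on or above some point of the section `T_x`. Sections
are encoded as preimages under `Prod.mk x`. -/
def fiberwiseUpperClosure [Preorder Y] (T : Set (X × Y)) : Set (X × Y) :=
  {p | p.2 ∈ upperClosure (Prod.mk p.1 ⁻¹' T)}

/-- The points `(x, y)` for which `y` lies on or below some point of the section `T_x`. Sections
are encoded as preimages under `Prod.mk x`. -/
def fiberwiseLowerClosure [Preorder Y] (T : Set (X × Y)) : Set (X × Y) :=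
  {p | p.2 ∈ lowerClosure (Prod.mk p.1 ⁻¹' T)}

lemma fiberwiseUpperClosure_inter_fiberwiseLowerClosure [Preorder Y] {T : Set (X × Y)}
    (hT : ∀ x, OrdConnected (Prod.mk x ⁻¹' T)) :
    fiberwiseUpperClosure T ∩ fiberwiseLowerClosure T = T := by
  ext ⟨x, y⟩
  exact Set.ext_iff.mp (hT x).upperClosure_inter_lowerClosure y

lemma fiberwiseUpperClosure_union_fiberwiseLowerClosure [LinearOrder Y] {T : Set (X × Y)}
    (hT : ∀ x, (Prod.mk x ⁻¹' T).Nonempty) :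
    fiberwiseUpperClosure T ∪ fiberwiseLowerClosure T = univ := by
  refine eq_univ_of_forall fun ⟨x, y⟩ ↦ ?_
  obtain ⟨m, hm⟩ := hT x
  exact (le_total m y).imp (fun hmy ↦ ⟨m, hm, hmy⟩) (fun hym ↦ ⟨m, hm, hym⟩)

variable [TopologicalSpace X] [TopologicalSpace Y] [Preorder Y] [OrderClosedTopology Y]
  {K : Set Y} {T : Set (X × Y)}

lemma isClosed_fiberwiseUpperClosure (hK : IsCompact K) (hTK : T ⊆ univ ×ˢ K)
    (hT : IsClosed T) : IsClosed (fiberwiseUpperClosure T) :=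
  isClosed_setRel_comp_of_subset_prod_isCompact (Q := {q | q.1 ≤ q.2}) hK hTK hT
    (isClosed_le continuous_fst continuous_snd)

lemma isClosed_fiberwiseLowerClosure (hK : IsCompact K) (hTK : T ⊆ univ ×ˢ K)
    (hT : IsClosed T) : IsClosed (fiberwiseLowerClosure T) :=
  isClosed_setRel_comp_of_subset_prod_isCompact (Q := {q | q.2 ≤ q.1}) hK hTK hT
    (isClosed_le continuous_snd continuous_fst)

end FiberwiseClosure

theorem ricceri_intersection_nonempty_general
    {X Y : Type*} [TopologicalSpace X] [TopologicalSpace Y] [LinearOrder Y] [OrderClosedTopology Y]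
    {K : Set Y} {S T : Set (X × Y)} (hK : IsCompact K) (hTK : T ⊆ univ ×ˢ K)
    (hS : IsPreconnected S)
    (hS_lower : ∃ p ∈ S, p.2 ∈ lowerBounds K) (hS_upper : ∃ p ∈ S, p.2 ∈ upperBounds K)
    (hT : IsClosed T) (hT_nonempty : ∀ x, (Prod.mk x ⁻¹' T).Nonempty)
    (hT_ordConnected : ∀ x, OrdConnected (Prod.mk x ⁻¹' T)) :
    (S ∩ T).Nonempty := by
  have meets_upper : (S ∩ fiberwiseUpperClosure T).Nonempty := by
    obtain ⟨p, hpS, hpK⟩ := hS_upper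
    obtain ⟨m, hm⟩ := hT_nonempty p.1
    exact ⟨p, hpS, m, hm, hpK (hTK hm).2⟩
  have meets_lower : (S ∩ fiberwiseLowerClosure T).Nonempty := by
    obtain ⟨p, hpS, hpK⟩ := hS_lower
    obtain ⟨m, hm⟩ := hT_nonempty p.1
    exact ⟨p, hpS, m, hm, hpK (hTK hm).2⟩
  have covers : S ⊆ fiberwiseUpperClosure T ∪ fiberwiseLowerClosure T :=
    (subset_univ S).trans_eq (fiberwiseUpperClosure_union_fiberwiseLowerClosure hT_nonempty).symm
  rw [← fiberwiseUpperClosure_inter_fiberwiseLowerClosure hT_ordConnected]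
  exact isPreconnected_closed_iff.mp hS _ _ (isClosed_fiberwiseUpperClosure hK hTK hT)
    (isClosed_fiberwiseLowerClosure hK hTK hT) covers meets_upper meets_lower

/-- **Theorem C of Ricceri's paper** ([1], Theorem 2.3).
Let `X` be a topological space, `I = [a,b]` a compact interval, and
`S, T ⊆ X × I`. Assume `S` is connected and `S^λ ≠ ∅` for all `λ ∈ I`, while
`T` is closed and `T_x` is non-empty and connected for all `x ∈ X`. Then
`S ∩ T ≠ ∅`. -/
theorem ricceri_intersection_nonempty
    {X : Type*} [TopologicalSpace X]
    (a b : ℝ) (hab : a ≤ b) (S T : Set (X × ℝ))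
    (hSsub : S ⊆ Set.univ ×ˢ Set.Icc a b) (hTsub : T ⊆ Set.univ ×ˢ Set.Icc a b)
    (hSconn : IsConnected S)
    (hSsec : ∀ l ∈ Set.Icc a b, ∃ u : X, (u, l) ∈ S)
    (hTclosed : IsClosed T)
    (hTne : ∀ x : X, {m : ℝ | (x, m) ∈ T}.Nonempty)
    (hTconn : ∀ x : X, IsPreconnected {m : ℝ | (x, m) ∈ T}) :
    (S ∩ T).Nonempty := by
  obtain ⟨u, hu⟩ := hSsec a (left_mem_Icc.mpr hab)
  obtain ⟨v, hv⟩ := hSsec b (right_mem_Icc.mpr hab)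
  exact ricceri_intersection_nonempty_general isCompact_Icc hTsub hSconn.isPreconnected
    ⟨(u, a), hu, fun _ hm ↦ hm.1⟩ ⟨(v, b), hv, fun _ hm ↦ hm.2⟩ hTclosed hTne
    fun x ↦ (hTconn x).ordConnected
end
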